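/- arXiv:2004.05984 — 3 statements merged into one kernel-verified Lean document; each statement's English description precedes it below -/
import Mathlib

section
/- Let δ ∈ (0,1) be sufficiently small, σ > 1, and θ₀, θ′ > 0. Then there exists a constant C > 0 such that for every integer k ≥ 1 (and similarly k ≤ −1), every η ∈ ℤ, every integer p ≥ 2 and every t > 0, the following sum over sextets is bounded: Σ_{(k₁,η₁,p₁,k₂,η₂,p₂): k₁+k₂=k, η₁+η₂=η, p₁+p₂=p, k₁≠0, p₁,p₂≥1} ∫₀ᵗ (t−s) · e^{−θ₀(s^{−δ} − t^{−δ})⟨k,η,p,kt⟩} · e^{−θ₀(p₁^{−δ} − p^{−δ})⟨k₁,η₁,p₁,k₁s⟩} · e^{−θ₀(p₂^{−δ} − p^{−δ})⟨k₂,η₂,p₂,kt − k₁s⟩} · ⟨s⟩^{−σ} ds ≤ C ⟨t⟩^{−σ}, with C depending only on δ, σ, θ₀, θ′ and not on k, η, p, t. -/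
open MeasureTheory

/-- Japanese bracket of four real numbers: `⟨a,b,c,d⟩ = √(1+a²+b²+c²+d²)`. -/
noncomputable def jb4 (a b c d : ℝ) : ℝ := Real.sqrt (1 + a ^ 2 + b ^ 2 + c ^ 2 + d ^ 2)

/-- The summand in the echo-summation estimate: for a sextet
`(k₁,η₁,p₁, k−k₁, η−η₁, p−p₁)` with `k₁ ≠ 0`, the time integral of the product of the
three exponential gain factors coming from the monotonicity of `λ_p(t)`. -/
noncomputable def echoTerm (δ σ θ₀ : ℝ) (k η : ℤ) (p : ℕ) (t : ℝ) (z : ℤ × ℤ) (p₁ : ℕ) : ℝ :=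
  if z.1 = 0 then 0 else
    ∫ s in (0:ℝ)..t, (t - s) *
      Real.exp (-θ₀ * (s ^ (-δ) - t ^ (-δ)) * jb4 (k : ℝ) (η : ℝ) (p : ℝ) ((k : ℝ) * t)) *
      Real.exp (-θ₀ * ((p₁ : ℝ) ^ (-δ) - (p : ℝ) ^ (-δ)) *
        jb4 (z.1 : ℝ) (z.2 : ℝ) (p₁ : ℝ) ((z.1 : ℝ) * s)) *
      Real.exp (-θ₀ * (((p - p₁ : ℕ) : ℝ) ^ (-δ) - (p : ℝ) ^ (-δ)) *
        jb4 ((k - z.1 : ℤ) : ℝ) ((η - z.2 : ℤ) : ℝ) ((p - p₁ : ℕ) : ℝ)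
          ((k : ℝ) * t - (z.1 : ℝ) * s)) *
      (Real.sqrt (1 + s ^ 2)) ^ (-σ)

/-!
Since `p₁ + p₂ = p`, one of the modes has index `m ≤ p / 2`. For it the drop `m^{-δ} - p^{-δ}` is
comparable to `m^{-δ}`, so its gain factor is stretched exponential in its bracket: this pays for
the summation over the lattice and leaves `(1 + w²)⁻²`, where `w ∈ {k₁ s, k t - k₁ s}` is the last
entry of that bracket. The gain of the other mode is discarded.

For the time integral there are two regimes. If `|k| (t - s) < t / 4` then `s` and `t` are
comparable, and `|w| ≥ t - s` because `k₁` and `k - k₁` are integers: this absorbs the weight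
`t - s` and leaves an integrable `(1 + (t - s)²)⁻¹`. Otherwise the convexity of `x ↦ x^{-δ}` makes
the temporal gain stretched exponential in `⟨t⟩`, which beats every power.
-/

section Brackets

lemma sq_jb4 (a b c d : ℝ) : jb4 a b c d ^ 2 = 1 + a ^ 2 + b ^ 2 + c ^ 2 + d ^ 2 :=
  Real.sq_sqrt (by positivity)

lemma one_le_jb4 (a b c d : ℝ) : 1 ≤ jb4 a b c d :=
  Real.one_le_sqrt.mpr (by nlinarith only [sq_nonneg a, sq_nonneg b, sq_nonneg c, sq_nonneg d])

lemma le_jb4_third (a b c d : ℝ) : c ≤ jb4 a b c d :=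
  Real.le_sqrt_of_sq_le (by nlinarith only [sq_nonneg a, sq_nonneg b, sq_nonneg d])

lemma abs_mul_sqrt_one_add_sq_le_jb4 (k η p t : ℝ) :
    |k| * √(1 + t ^ 2) ≤ jb4 k η p (k * t) := by
  refine Real.le_sqrt_of_sq_le ?_
  rw [mul_pow, sq_abs, Real.sq_sqrt (by positivity)]
  nlinarith only [sq_nonneg η, sq_nonneg p]

lemma prod_one_add_sq_le_jb4_pow (a b c d : ℝ) :
    (1 + a ^ 2) * (1 + b ^ 2) * (1 + c ^ 2) * (1 + d ^ 2) ^ 2 ≤ jb4 a b c d ^ 10 := by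
  have hX := sq_jb4 a b c d
  have ha := sq_nonneg a
  have hb := sq_nonneg b
  have hc := sq_nonneg c
  have hd := sq_nonneg d
  set X := jb4 a b c d
  calc (1 + a ^ 2) * (1 + b ^ 2) * (1 + c ^ 2) * (1 + d ^ 2) ^ 2
      ≤ X ^ 2 * X ^ 2 * X ^ 2 * (X ^ 2) ^ 2 := by gcongr <;> linarith
    _ = X ^ 10 := by ring

lemma one_le_sqrt_one_add_sq (t : ℝ) : 1 ≤ √(1 + t ^ 2) :=
  Real.one_le_sqrt.mpr (le_add_of_nonneg_right (sq_nonneg t))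

lemma le_sqrt_one_add_sq (t : ℝ) : t ≤ √(1 + t ^ 2) :=
  Real.le_sqrt_of_sq_le (le_add_of_nonneg_left zero_le_one)

lemma sqrt_one_add_sq_le_two_mul {s t : ℝ} (ht : 0 ≤ t) (hts : t ≤ 2 * s) :
    √(1 + t ^ 2) ≤ 2 * √(1 + s ^ 2) := by
  refine (Real.sqrt_le_left (by positivity)).mpr ?_
  rw [mul_pow, Real.sq_sqrt (by positivity)]
  nlinarith only [ht, hts]

lemma rpow_neg_le_div_rpow_abs_mul {S T : ℝ} (hS : 0 < S) (hST : S ≤ T) (σ : ℝ) :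
    S ^ (-σ) ≤ (T / S) ^ |σ| * T ^ (-σ) := by
  have hT : 0 < T := hS.trans_le hST
  calc S ^ (-σ) = (T / S) ^ σ * T ^ (-σ) := by
        rw [Real.div_rpow hT.le hS.le, Real.rpow_neg hS.le, Real.rpow_neg hT.le]
        field_simp
    _ ≤ (T / S) ^ |σ| * T ^ (-σ) := by
        gcongr
        exacts [(one_le_div hS).mpr hST, le_abs_self σ]

end Brackets

section Decay

lemma exists_exp_neg_mul_rpow_le {c α : ℝ} (hc : 0 < c) (hα : 0 < α) (r : ℝ) :
    ∃ C, 0 < C ∧ ∀ x : ℝ, 1 ≤ x → Real.exp (-(c * x ^ α)) ≤ C * x ^ (-r) := by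
  obtain ⟨M, hM⟩ := exists_nat_ge (r / α)
  refine ⟨M.factorial / c ^ M, by positivity, fun x hx => ?_⟩
  have hx₀ : 0 < x := zero_lt_one.trans_le hx
  have hpow : x ^ r ≤ (x ^ α) ^ M := by
    rw [← Real.rpow_natCast, ← Real.rpow_mul hx₀.le]
    exact Real.rpow_le_rpow_of_exponent_le hx ((div_le_iff₀' hα).mp hM)
  have hexp : (c * x ^ α) ^ M / M.factorial ≤ Real.exp (c * x ^ α) :=
    Real.pow_div_factorial_le_exp _ (by positivity) M
  calc Real.exp (-(c * x ^ α)) = (Real.exp (c * x ^ α))⁻¹ := Real.exp_neg _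
    _ ≤ ((c * x ^ α) ^ M / M.factorial)⁻¹ := inv_anti₀ (by positivity) hexp
    _ = M.factorial / c ^ M * ((x ^ α) ^ M)⁻¹ := by rw [mul_pow]; field_simp
    _ ≤ M.factorial / c ^ M * x ^ (-r) := by
        rw [Real.rpow_neg hx₀.le]
        gcongr

lemma one_add_mul_one_sub_le_rpow_neg {δ x : ℝ} (hδ : 0 ≤ δ) (hx : 0 < x) :
    1 + δ * (1 - x) ≤ x ^ (-δ) := by
  have hlog : δ * Real.log x ≤ δ * (x - 1) := by
    gcongr
    exact Real.log_le_sub_one_of_pos hx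
  rw [Real.rpow_def_of_pos hx]
  linarith [Real.add_one_le_exp (Real.log x * -δ)]

lemma mul_sub_div_mul_rpow_neg_le {δ s t : ℝ} (hδ : 0 ≤ δ) (hs : 0 < s) (ht : 0 < t) :
    δ * ((t - s) / t) * t ^ (-δ) ≤ s ^ (-δ) - t ^ (-δ) := by
  have hratio : s ^ (-δ) = (s / t) ^ (-δ) * t ^ (-δ) := by
    rw [← Real.mul_rpow (by positivity) ht.le, div_mul_cancel₀ s ht.ne']
  have htangent : (1 + δ * (1 - s / t)) * t ^ (-δ) ≤ (s / t) ^ (-δ) * t ^ (-δ) := by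
    gcongr
    exact one_add_mul_one_sub_le_rpow_neg hδ (by positivity)
  rw [hratio, sub_div, div_self ht.ne']
  linarith

lemma one_sub_two_rpow_neg_mul_le {δ m p : ℝ} (hδ : 0 ≤ δ) (hm : 0 < m) (hmp : 2 * m ≤ p) :
    (1 - 2 ^ (-δ)) * m ^ (-δ) ≤ m ^ (-δ) - p ^ (-δ) := by
  have hp : p ^ (-δ) ≤ (2 * m) ^ (-δ) :=
    Real.rpow_le_rpow_of_nonpos (by positivity) hmp (neg_nonpos.mpr hδ)
  rw [Real.mul_rpow zero_le_two hm.le] at hp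
  linarith

end Decay

/-- The gain factor `e^{-θ (a^{-δ} - b^{-δ}) X}` produced on a frequency of size `X` when the
analyticity radius drops from `a^{-δ}` to `b^{-δ}`. Each of the three exponentials in `echoTerm` is
one, with `a`, `b` either times or values of the index `p`. -/
noncomputable def radiusGain (θ δ a b X : ℝ) : ℝ :=
  Real.exp (-θ * (a ^ (-δ) - b ^ (-δ)) * X)

section RadiusGain

variable {θ δ : ℝ}

lemma radiusGain_nonneg (θ δ a b X : ℝ) : 0 ≤ radiusGain θ δ a b X :=
  (Real.exp_pos _).le

lemma radiusGain_le_one {a b X : ℝ} (hθ : 0 ≤ θ) (hδ : 0 ≤ δ) (ha : 0 < a) (hab : a ≤ b)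
    (hX : 0 ≤ X) : radiusGain θ δ a b X ≤ 1 := by
  have hdrop : 0 ≤ a ^ (-δ) - b ^ (-δ) :=
    sub_nonneg.mpr (Real.rpow_le_rpow_of_nonpos ha hab (neg_nonpos.mpr hδ))
  refine Real.exp_le_one_iff.mpr ?_
  linarith [mul_nonneg (mul_nonneg hθ hdrop) hX]

lemma exists_radiusGain_le_rpow_neg {c : ℝ} (hθ : 0 < θ) (hδ : δ < 1) (hc : 0 < c) (r : ℝ) :
    ∃ C, 0 < C ∧ ∀ a b X Y : ℝ, 1 ≤ Y → c * Y ^ (-δ) * Y ≤ (a ^ (-δ) - b ^ (-δ)) * X →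
      radiusGain θ δ a b X ≤ C * Y ^ (-r) := by
  obtain ⟨C, hC, hdecay⟩ :=
    exists_exp_neg_mul_rpow_le (mul_pos hθ hc) (sub_pos.mpr hδ) r
  refine ⟨C, hC, fun a b X Y hY hdrop => le_trans ?_ (hdecay Y hY)⟩
  have hexponent : Y ^ (1 - δ) = Y ^ (-δ) * Y := by
    rw [← Real.rpow_add_one (by positivity), neg_add_eq_sub]
  refine Real.exp_le_exp.mpr ?_
  rw [hexponent]
  linarith [mul_le_mul_of_nonneg_left hdrop hθ.le]

lemma exists_radiusGain_jb4_le (hθ : 0 < θ) (hδ₀ : 0 < δ) (hδ₁ : δ < 1) :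
    ∃ C, 0 < C ∧ ∀ a b m w p : ℝ, 0 < m → 2 * m ≤ p →
      radiusGain θ δ m p (jb4 a b m w) ≤
        C * ((1 + a ^ 2)⁻¹ * (1 + b ^ 2)⁻¹ * (1 + m ^ 2)⁻¹ * ((1 + w ^ 2) ^ 2)⁻¹) := by
  have hc : (0 : ℝ) < 1 - 2 ^ (-δ) :=
    sub_pos.mpr (Real.rpow_lt_one_of_one_lt_of_neg one_lt_two (neg_neg_of_pos hδ₀))
  obtain ⟨C, hC, hgain⟩ := exists_radiusGain_le_rpow_neg hθ hδ₁ hc (10 : ℕ)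
  refine ⟨C, hC, fun a b m w p hm hmp => ?_⟩
  have hX := one_le_jb4 a b m w
  have hmX := le_jb4_third a b m w
  have hprod := prod_one_add_sq_le_jb4_pow a b m w
  set X := jb4 a b m w
  have hdrop : (1 - 2 ^ (-δ)) * X ^ (-δ) * X ≤ (m ^ (-δ) - p ^ (-δ)) * X := by
    gcongr
    calc (1 - 2 ^ (-δ)) * X ^ (-δ) ≤ (1 - 2 ^ (-δ)) * m ^ (-δ) :=
          mul_le_mul_of_nonneg_left
            (Real.rpow_le_rpow_of_nonpos hm hmX (neg_nonpos.mpr hδ₀.le)) hc.le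
      _ ≤ m ^ (-δ) - p ^ (-δ) := one_sub_two_rpow_neg_mul_le hδ₀.le hm hmp
  calc radiusGain θ δ m p X ≤ C * X ^ (-((10 : ℕ) : ℝ)) := hgain m p X X hX hdrop
    _ ≤ C * ((1 + a ^ 2) * (1 + b ^ 2) * (1 + m ^ 2) * (1 + w ^ 2) ^ 2)⁻¹ := by
        rw [Real.rpow_neg (by positivity), Real.rpow_natCast]
        gcongr
    _ = _ := by simp only [mul_inv]

lemma exists_radiusGain_time_le (hθ : 0 < θ) (hδ₀ : 0 < δ) (hδ₁ : δ < 1) (r : ℝ) :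
    ∃ C, 0 < C ∧ ∀ k η p s t : ℝ, 0 < s → s ≤ t → t / 4 ≤ |k| * (t - s) →
      radiusGain θ δ s t (jb4 k η p (k * t)) ≤ C * √(1 + t ^ 2) ^ (-r) := by
  obtain ⟨C, hC, hgain⟩ :=
    exists_radiusGain_le_rpow_neg hθ hδ₁ (by positivity : 0 < δ / 4) r
  refine ⟨C, hC, fun k η p s t hs hst hfar => hgain _ _ _ _ (one_le_sqrt_one_add_sq t) ?_⟩
  have ht : 0 < t := hs.trans_le hst
  have hfar' : 1 / 4 ≤ |k| * ((t - s) / t) := by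
    rw [← mul_div_assoc, le_div_iff₀ ht]
    linarith
  have hpow : √(1 + t ^ 2) ^ (-δ) ≤ t ^ (-δ) :=
    Real.rpow_le_rpow_of_nonpos ht (le_sqrt_one_add_sq t) (neg_nonpos.mpr hδ₀.le)
  have hdrop := mul_sub_div_mul_rpow_neg_le hδ₀.le hs ht
  have hbracket := abs_mul_sqrt_one_add_sq_le_jb4 k η p t
  set T := √(1 + t ^ 2)
  calc δ / 4 * T ^ (-δ) * T ≤ δ / 4 * t ^ (-δ) * T := by gcongr
    _ = 1 / 4 * (δ * t ^ (-δ) * T) := by ring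
    _ ≤ |k| * ((t - s) / t) * (δ * t ^ (-δ) * T) := by gcongr
    _ = δ * ((t - s) / t) * t ^ (-δ) * (|k| * T) := by ring
    _ ≤ (s ^ (-δ) - t ^ (-δ)) * jb4 k η p (k * t) := by
        gcongr
        exact le_trans (by positivity) hdrop

end RadiusGain

section TimeEstimate

variable {θ δ : ℝ}

lemma sub_le_abs_mul_of_near {k k₁ : ℤ} {s t : ℝ} (hk : k ≠ 0) (hk₁ : k₁ ≠ 0) (hs : 0 < s)
    (hst : s ≤ t) (hnear : |(k : ℝ)| * (t - s) < t / 4) : t - s ≤ |(k₁ : ℝ) * s| := by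
  have hk' : 1 ≤ |(k : ℝ)| := by exact_mod_cast Int.one_le_abs hk
  have hk₁' : 1 ≤ |(k₁ : ℝ)| := by exact_mod_cast Int.one_le_abs hk₁
  have hgap : t - s ≤ |(k : ℝ)| * (t - s) := le_mul_of_one_le_left (sub_nonneg.mpr hst) hk'
  have hmode : s ≤ |(k₁ : ℝ)| * s := le_mul_of_one_le_left hs.le hk₁'
  rw [abs_mul, abs_of_pos hs]
  linarith

lemma sub_le_abs_mul_sub_mul_of_near {k k₁ : ℤ} {s t : ℝ} (hk : k ≠ 0) (hs : 0 < s)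
    (hst : s ≤ t) (hnear : |(k : ℝ)| * (t - s) < t / 4) :
    t - s ≤ |(k : ℝ) * t - (k₁ : ℝ) * s| := by
  have hk' : 1 ≤ |(k : ℝ)| := by exact_mod_cast Int.one_le_abs hk
  have hgap : t - s ≤ |(k : ℝ)| * (t - s) := le_mul_of_one_le_left (sub_nonneg.mpr hst) hk'
  have habs : |(k : ℝ) * (t - s)| = |(k : ℝ)| * (t - s) := by
    rw [abs_mul, abs_of_nonneg (sub_nonneg.mpr hst)]
  rcases eq_or_ne k k₁ with rfl | hne
  · rwa [← mul_sub, habs]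
  · have hdiff : s ≤ |((k₁ : ℝ) - k) * s| := by
      rw [abs_mul, abs_of_pos hs]
      exact le_mul_of_one_le_left hs.le
        (by exact_mod_cast Int.one_le_abs (sub_ne_zero.mpr hne.symm))
    have htriangle := abs_sub_abs_le_abs_sub (((k₁ : ℝ) - k) * s) (k * (t - s))
    rw [abs_sub_comm, habs,
      show (k : ℝ) * (t - s) - (k₁ - k) * s = k * t - k₁ * s by ring] at htriangle
    linarith

lemma mul_inv_one_add_sq_sq_le {x w : ℝ} (hx : 0 ≤ x) (hxw : x ≤ |w|) :
    x * ((1 + w ^ 2) ^ 2)⁻¹ ≤ (1 + x ^ 2)⁻¹ := by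
  have hsq : 1 + x ^ 2 ≤ 1 + w ^ 2 := by
    rw [← sq_abs w]
    gcongr
  calc x * ((1 + w ^ 2) ^ 2)⁻¹ ≤ (1 + x ^ 2) * ((1 + x ^ 2) ^ 2)⁻¹ := by
        gcongr
        nlinarith only [sq_nonneg (x - 1), hx]
    _ = (1 + x ^ 2)⁻¹ := by field_simp

lemma time_weight_le_of_near {σ s t w G : ℝ} (hs : 0 < s) (hst : s ≤ t) (hts : t ≤ 2 * s)
    (hw : t - s ≤ |w|) (hG : G ≤ 1) :
    (t - s) * G * ((1 + w ^ 2) ^ 2)⁻¹ * √(1 + s ^ 2) ^ (-σ) ≤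
      2 ^ |σ| * √(1 + t ^ 2) ^ (-σ) * (1 + (t - s) ^ 2)⁻¹ := by
  have hgap : 0 ≤ t - s := sub_nonneg.mpr hst
  have hS : 0 < √(1 + s ^ 2) := by positivity
  have hST : √(1 + s ^ 2) ≤ √(1 + t ^ 2) := by gcongr
  have hratio : √(1 + t ^ 2) / √(1 + s ^ 2) ≤ 2 :=
    (div_le_iff₀ hS).mpr (sqrt_one_add_sq_le_two_mul (hs.le.trans hst) hts)
  have hpow : √(1 + s ^ 2) ^ (-σ) ≤ 2 ^ |σ| * √(1 + t ^ 2) ^ (-σ) :=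
    (rpow_neg_le_div_rpow_abs_mul hS hST σ).trans (by gcongr)
  have hweight := mul_inv_one_add_sq_sq_le hgap hw
  calc (t - s) * G * ((1 + w ^ 2) ^ 2)⁻¹ * √(1 + s ^ 2) ^ (-σ)
      = G * ((t - s) * ((1 + w ^ 2) ^ 2)⁻¹) * √(1 + s ^ 2) ^ (-σ) := by ring
    _ ≤ 1 * (1 + (t - s) ^ 2)⁻¹ * (2 ^ |σ| * √(1 + t ^ 2) ^ (-σ)) := by gcongr
    _ = _ := by ring

lemma time_weight_le_of_far {σ s t G C : ℝ} (hs : 0 ≤ s) (hst : s ≤ t)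
    (hG₀ : 0 ≤ G) (hG : G ≤ C * √(1 + t ^ 2) ^ (-(3 + |σ|))) :
    (t - s) * G * √(1 + s ^ 2) ^ (-σ) ≤ C * √(1 + t ^ 2) ^ (-σ) * (1 + (t - s) ^ 2)⁻¹ := by
  have hgap : t - s ≤ √(1 + t ^ 2) := (sub_le_self t hs).trans (le_sqrt_one_add_sq t)
  have hS := one_le_sqrt_one_add_sq s
  have hST : √(1 + s ^ 2) ≤ √(1 + t ^ 2) := by gcongr
  have hden : 1 + (t - s) ^ 2 ≤ √(1 + t ^ 2) ^ 2 := by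
    rw [Real.sq_sqrt (by positivity)]
    gcongr
    exact sub_le_self t hs
  set S := √(1 + s ^ 2)
  set T := √(1 + t ^ 2)
  have hT : 0 < T := by linarith
  have hC : 0 ≤ C := nonneg_of_mul_nonneg_left (hG₀.trans hG) (by positivity)
  have hpow : S ^ (-σ) ≤ T ^ |σ| * T ^ (-σ) := by
    refine (rpow_neg_le_div_rpow_abs_mul (by positivity) hST σ).trans ?_
    gcongr
    exact div_le_self hT.le hS
  have hcancel : T * T ^ (-(3 + |σ|)) * T ^ |σ| = (T ^ 2)⁻¹ := by
    rw [neg_add, Real.rpow_add hT, Real.rpow_neg hT.le |σ|, Real.rpow_neg hT.le 3]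
    norm_cast
    field_simp
  calc (t - s) * G * S ^ (-σ)
      ≤ T * (C * T ^ (-(3 + |σ|))) * (T ^ |σ| * T ^ (-σ)) := by gcongr
    _ = C * T ^ (-σ) * (T * T ^ (-(3 + |σ|)) * T ^ |σ|) := by ring
    _ ≤ C * T ^ (-σ) * (1 + (t - s) ^ 2)⁻¹ := by
        rw [hcancel]
        gcongr

lemma exists_temporal_bound (hθ : 0 < θ) (hδ₀ : 0 < δ) (hδ₁ : δ < 1) (σ : ℝ) :
    ∃ C, 0 < C ∧ ∀ k η p w s t : ℝ, 1 ≤ |k| → 0 < s → s ≤ t →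
      (|k| * (t - s) < t / 4 → t - s ≤ |w|) →
      (t - s) * radiusGain θ δ s t (jb4 k η p (k * t)) * ((1 + w ^ 2) ^ 2)⁻¹ *
          √(1 + s ^ 2) ^ (-σ) ≤
        C * √(1 + t ^ 2) ^ (-σ) * (1 + (t - s) ^ 2)⁻¹ := by
  obtain ⟨C, hC, hgain⟩ := exists_radiusGain_time_le hθ hδ₀ hδ₁ (3 + |σ|)
  refine ⟨max C (2 ^ |σ|), by positivity, fun k η p w s t hk hs hst hw => ?_⟩
  have hts : 0 ≤ t - s := sub_nonneg.mpr hst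
  have hG := radiusGain_nonneg θ δ s t (jb4 k η p (k * t))
  rcases lt_or_ge (|k| * (t - s)) (t / 4) with hnear | hfar
  · have hgap : t - s ≤ |k| * (t - s) := le_mul_of_one_le_left hts hk
    have hG₁ : radiusGain θ δ s t (jb4 k η p (k * t)) ≤ 1 :=
      radiusGain_le_one hθ.le hδ₀.le hs hst (zero_le_one.trans (one_le_jb4 _ _ _ _))
    refine (time_weight_le_of_near hs hst (by linarith) (hw hnear) hG₁).trans ?_
    gcongr
    exact le_max_right _ _
  · have hw₁ : ((1 + w ^ 2) ^ 2)⁻¹ ≤ 1 :=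
      inv_le_one_of_one_le₀ (one_le_pow₀ (le_add_of_nonneg_right (sq_nonneg w)))
    calc _ ≤ (t - s) * radiusGain θ δ s t (jb4 k η p (k * t)) * 1 * √(1 + s ^ 2) ^ (-σ) := by
          gcongr
      _ ≤ C * √(1 + t ^ 2) ^ (-σ) * (1 + (t - s) ^ 2)⁻¹ := by
          rw [mul_one]
          exact time_weight_le_of_far hs.le hst hG (hgain k η p s t hs hst hfar)
      _ ≤ _ := by
          gcongr
          exact le_max_left _ _

lemma exists_low_mode_bound (hθ : 0 < θ) (hδ₀ : 0 < δ) (hδ₁ : δ < 1) (σ : ℝ) :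
    ∃ C, 0 < C ∧ ∀ k η p a b m w s t : ℝ, 1 ≤ |k| → 0 < m → 2 * m ≤ p → 0 < s → s ≤ t →
      (|k| * (t - s) < t / 4 → t - s ≤ |w|) →
      (t - s) * radiusGain θ δ s t (jb4 k η p (k * t)) * radiusGain θ δ m p (jb4 a b m w) *
          √(1 + s ^ 2) ^ (-σ) ≤
        C * √(1 + t ^ 2) ^ (-σ) * ((1 + a ^ 2)⁻¹ * (1 + b ^ 2)⁻¹ * (1 + m ^ 2)⁻¹) *
          (1 + (t - s) ^ 2)⁻¹ := by
  obtain ⟨C₁, hC₁, hmode⟩ := exists_radiusGain_jb4_le hθ hδ₀ hδ₁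
  obtain ⟨C₂, hC₂, htime⟩ := exists_temporal_bound hθ hδ₀ hδ₁ σ
  refine ⟨C₁ * C₂, by positivity, fun k η p a b m w s t hk hm hmp hs hst hw => ?_⟩
  have : 0 ≤ t - s := sub_nonneg.mpr hst
  have hmode := hmode a b m w p hm hmp
  have htime := htime k η p w s t hk hs hst hw
  have hG := radiusGain_nonneg θ δ s t (jb4 k η p (k * t))
  set G := radiusGain θ δ s t (jb4 k η p (k * t))
  set W := (1 + a ^ 2)⁻¹ * (1 + b ^ 2)⁻¹ * (1 + m ^ 2)⁻¹
  calc (t - s) * G * radiusGain θ δ m p (jb4 a b m w) * √(1 + s ^ 2) ^ (-σ)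
      ≤ (t - s) * G * (C₁ * (W * ((1 + w ^ 2) ^ 2)⁻¹)) * √(1 + s ^ 2) ^ (-σ) := by gcongr
    _ = C₁ * W * ((t - s) * G * ((1 + w ^ 2) ^ 2)⁻¹ * √(1 + s ^ 2) ^ (-σ)) := by ring
    _ ≤ C₁ * W * (C₂ * √(1 + t ^ 2) ^ (-σ) * (1 + (t - s) ^ 2)⁻¹) := by gcongr
    _ = _ := by ring

end TimeEstimate

/-- The weight `(1 + z₁²)⁻¹ (1 + z₂²)⁻¹` on the frequency lattice, which makes the sum over
`(k₁, η₁)` converge. -/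
noncomputable def latticeWeight (z : ℤ × ℤ) : ℝ :=
  (1 + (z.1 : ℝ) ^ 2)⁻¹ * (1 + (z.2 : ℝ) ^ 2)⁻¹

/-- The integrand of `echoTerm`, written with `radiusGain`. -/
noncomputable def echoIntegrand (δ σ θ : ℝ) (k η : ℤ) (p : ℕ) (t : ℝ) (z : ℤ × ℤ) (p₁ : ℕ)
    (s : ℝ) : ℝ :=
  (t - s) * radiusGain θ δ s t (jb4 k η p (k * t)) *
    radiusGain θ δ p₁ p (jb4 z.1 z.2 p₁ (z.1 * s)) *
    radiusGain θ δ (p - p₁ : ℕ) p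
      (jb4 (k - z.1 : ℤ) (η - z.2 : ℤ) (p - p₁ : ℕ) (k * t - z.1 * s)) *
    √(1 + s ^ 2) ^ (-σ)

section EchoTerm

variable {θ δ : ℝ}

lemma latticeWeight_pos (z : ℤ × ℤ) : 0 < latticeWeight z := by
  unfold latticeWeight
  positivity

lemma echoTerm_of_ne_zero (δ σ θ : ℝ) (k η : ℤ) (p : ℕ) (t : ℝ) {z : ℤ × ℤ} (p₁ : ℕ)
    (hz : z.1 ≠ 0) :
    echoTerm δ σ θ k η p t z p₁ = ∫ s in (0 : ℝ)..t, echoIntegrand δ σ θ k η p t z p₁ s :=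
  if_neg hz

lemma echoIntegrand_nonneg (δ σ θ : ℝ) (k η : ℤ) (p : ℕ) {s t : ℝ} (z : ℤ × ℤ) (p₁ : ℕ)
    (hst : s ≤ t) : 0 ≤ echoIntegrand δ σ θ k η p t z p₁ s := by
  have : 0 ≤ t - s := sub_nonneg.mpr hst
  unfold echoIntegrand radiusGain
  positivity

lemma radiusGain_natCast_jb4_le_one (hθ : 0 ≤ θ) (hδ : 0 ≤ δ) {m p : ℕ} (hm : 0 < m)
    (hmp : m ≤ p) (a b w : ℝ) : radiusGain θ δ m p (jb4 a b m w) ≤ 1 :=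
  radiusGain_le_one hθ hδ (by exact_mod_cast hm) (by exact_mod_cast hmp)
    (zero_le_one.trans (one_le_jb4 a b m w))

lemma echoIntegrand_le_first_mode (hθ : 0 ≤ θ) (hδ : 0 ≤ δ) (σ : ℝ) (k η : ℤ) {p p₁ : ℕ}
    {s t : ℝ} (z : ℤ × ℤ) (hst : s ≤ t) (hp₁ : p₁ < p) :
    echoIntegrand δ σ θ k η p t z p₁ s ≤
      (t - s) * radiusGain θ δ s t (jb4 k η p (k * t)) *
        radiusGain θ δ p₁ p (jb4 z.1 z.2 p₁ (z.1 * s)) * √(1 + s ^ 2) ^ (-σ) := by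
  have hfactors := mul_nonneg (mul_nonneg (sub_nonneg.mpr hst)
    (radiusGain_nonneg θ δ s t (jb4 k η p (k * t))))
    (radiusGain_nonneg θ δ p₁ p (jb4 z.1 z.2 p₁ (z.1 * s)))
  have hsecond := radiusGain_natCast_jb4_le_one hθ hδ (Nat.sub_pos_of_lt hp₁) (Nat.sub_le p p₁)
    (k - z.1 : ℤ) (η - z.2 : ℤ) (k * t - z.1 * s)
  exact mul_le_mul_of_nonneg_right (mul_le_of_le_one_right hfactors hsecond) (by positivity)

lemma echoIntegrand_le_second_mode (hθ : 0 ≤ θ) (hδ : 0 ≤ δ) (σ : ℝ) (k η : ℤ) {p p₁ : ℕ}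
    {s t : ℝ} (z : ℤ × ℤ) (hst : s ≤ t) (hp₁ : 0 < p₁) (hp₁p : p₁ ≤ p) :
    echoIntegrand δ σ θ k η p t z p₁ s ≤
      (t - s) * radiusGain θ δ s t (jb4 k η p (k * t)) *
        radiusGain θ δ (p - p₁ : ℕ) p
          (jb4 (k - z.1 : ℤ) (η - z.2 : ℤ) (p - p₁ : ℕ) (k * t - z.1 * s)) *
        √(1 + s ^ 2) ^ (-σ) := by
  have hfactors := mul_nonneg (sub_nonneg.mpr hst)
    (radiusGain_nonneg θ δ s t (jb4 k η p (k * t)))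
  have hfirst := radiusGain_natCast_jb4_le_one hθ hδ hp₁ hp₁p z.1 z.2 (z.1 * s)
  exact mul_le_mul_of_nonneg_right (mul_le_mul_of_nonneg_right
    (mul_le_of_le_one_right hfactors hfirst) (radiusGain_nonneg _ _ _ _ _)) (by positivity)

lemma exists_echoIntegrand_le (hθ : 0 < θ) (hδ₀ : 0 < δ) (hδ₁ : δ < 1) (σ : ℝ) :
    ∃ C, 0 < C ∧ ∀ (k η : ℤ) (p : ℕ) (s t : ℝ) (z : ℤ × ℤ), k ≠ 0 → z.1 ≠ 0 →
      0 < s → s ≤ t → ∀ p₁ ∈ Finset.Ico 1 p,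
        echoIntegrand δ σ θ k η p t z p₁ s ≤
          C * √(1 + t ^ 2) ^ (-σ) *
            (latticeWeight z * (1 + (p₁ : ℝ) ^ 2)⁻¹ +
              latticeWeight ((k, η) - z) * (1 + ((p - p₁ : ℕ) : ℝ) ^ 2)⁻¹) *
            (1 + (t - s) ^ 2)⁻¹ := by
  obtain ⟨C, hC, hlow⟩ := exists_low_mode_bound hθ hδ₀ hδ₁ σ
  refine ⟨C, hC, fun k η p s t z hk hz hs hst p₁ hp₁ => ?_⟩
  obtain ⟨hp₁_pos, hp₁_lt⟩ := Finset.mem_Ico.mp hp₁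
  have hk' : 1 ≤ |(k : ℝ)| := by exact_mod_cast Int.one_le_abs hk
  have hW₁ := latticeWeight_pos z
  have hW₂ := latticeWeight_pos ((k, η) - z)
  rcases le_total (2 * p₁) p with hfirst | hsecond
  · refine (echoIntegrand_le_first_mode hθ.le hδ₀.le σ k η z hst hp₁_lt).trans
      ((hlow _ _ _ _ _ _ _ _ _ hk' (by exact_mod_cast hp₁_pos) (by exact_mod_cast hfirst)
        hs hst (sub_le_abs_mul_of_near hk hz hs hst)).trans ?_)
    gcongr
    exact le_add_of_nonneg_right (by positivity)
  · refine (echoIntegrand_le_second_mode hθ.le hδ₀.le σ k η z hst hp₁_pos hp₁_lt.le).trans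
      ((hlow _ _ _ _ _ _ _ _ _ hk' (by exact_mod_cast Nat.sub_pos_of_lt hp₁_lt)
        (by exact_mod_cast (by lia : 2 * (p - p₁) ≤ p))
        hs hst (sub_le_abs_mul_sub_mul_of_near hk hs hst)).trans ?_)
    gcongr
    exact le_add_of_nonneg_left (by positivity)

lemma integral_inv_one_add_sub_sq (t : ℝ) :
    ∫ s in (0 : ℝ)..t, (1 + (t - s) ^ 2)⁻¹ = Real.arctan t := by
  rw [intervalIntegral.integral_comp_sub_left (fun x => (1 + x ^ 2)⁻¹)]
  simp

lemma intervalIntegral_le_of_le_inv_one_add_sub_sq {f : ℝ → ℝ} {A t : ℝ} (hA : 0 ≤ A)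
    (ht : 0 ≤ t) (hf₀ : ∀ s ∈ Set.Ioc 0 t, 0 ≤ f s)
    (hf : ∀ s ∈ Set.Ioc 0 t, f s ≤ A * (1 + (t - s) ^ 2)⁻¹) :
    ∫ s in (0 : ℝ)..t, f s ≤ A * (Real.pi / 2) := by
  have hcont : Continuous fun s : ℝ => A * (1 + (t - s) ^ 2)⁻¹ :=
    continuous_const.mul (Continuous.inv₀ (by fun_prop) fun s => by positivity)
  calc ∫ s in (0 : ℝ)..t, f s ≤ ∫ s in (0 : ℝ)..t, A * (1 + (t - s) ^ 2)⁻¹ := by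
        rw [intervalIntegral.integral_of_le ht, intervalIntegral.integral_of_le ht]
        exact integral_mono_of_nonneg (ae_restrict_of_forall_mem measurableSet_Ioc hf₀)
          (hcont.intervalIntegrable 0 t).1 (ae_restrict_of_forall_mem measurableSet_Ioc hf)
    _ = A * Real.arctan t := by
        rw [intervalIntegral.integral_const_mul, integral_inv_one_add_sub_sq]
    _ ≤ A * (Real.pi / 2) := by
        gcongr
        exact (Real.arctan_lt_pi_div_two t).le

lemma echoTerm_nonneg (δ σ θ : ℝ) (k η : ℤ) (p : ℕ) {t : ℝ} (z : ℤ × ℤ) (p₁ : ℕ)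
    (ht : 0 ≤ t) : 0 ≤ echoTerm δ σ θ k η p t z p₁ := by
  by_cases hz : z.1 = 0
  · exact (if_pos hz).ge
  · rw [echoTerm_of_ne_zero δ σ θ k η p t p₁ hz]
    exact intervalIntegral.integral_nonneg ht fun s hs =>
      echoIntegrand_nonneg δ σ θ k η p z p₁ hs.2

lemma exists_echoTerm_le (hθ : 0 < θ) (hδ₀ : 0 < δ) (hδ₁ : δ < 1) (σ : ℝ) :
    ∃ C, 0 < C ∧ ∀ (k η : ℤ) (p : ℕ) (t : ℝ) (z : ℤ × ℤ), k ≠ 0 → 0 ≤ t →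
      ∀ p₁ ∈ Finset.Ico 1 p,
        echoTerm δ σ θ k η p t z p₁ ≤
          C * √(1 + t ^ 2) ^ (-σ) *
            (latticeWeight z * (1 + (p₁ : ℝ) ^ 2)⁻¹ +
              latticeWeight ((k, η) - z) * (1 + ((p - p₁ : ℕ) : ℝ) ^ 2)⁻¹) := by
  obtain ⟨C, hC, hbound⟩ := exists_echoIntegrand_le hθ hδ₀ hδ₁ σ
  refine ⟨C * (Real.pi / 2), by positivity, fun k η p t z hk ht p₁ hp₁ => ?_⟩
  have hW₁ := latticeWeight_pos z
  have hW₂ := latticeWeight_pos ((k, η) - z)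
  by_cases hz : z.1 = 0
  · exact (if_pos hz).trans_le (by positivity)
  · rw [echoTerm_of_ne_zero δ σ θ k η p t p₁ hz, mul_right_comm C, mul_right_comm]
    exact intervalIntegral_le_of_le_inv_one_add_sub_sq (by positivity) ht
      (fun s hs => echoIntegrand_nonneg δ σ θ k η p z p₁ hs.2)
      (fun s hs => hbound k η p s t z hk hz hs.1 hs.2 p₁ hp₁)

end EchoTerm

section Summation

lemma summable_inv_one_add_int_sq : Summable fun a : ℤ => (1 + (a : ℝ) ^ 2)⁻¹ := by
  -- The shift by `1 / 2` keeps the comparison series away from the junk value `1 / 0 = 0`.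
  refine Summable.of_nonneg_of_le (fun a => by positivity) (fun a => ?_)
    (((Real.summable_one_div_int_add_rpow (1 / 2) 2).mpr one_lt_two).mul_left 2)
  have hne : (a : ℝ) + 1 / 2 ≠ 0 := fun h => by
    have : 2 * a + 1 = 0 := by exact_mod_cast (by linarith : 2 * (a : ℝ) + 1 = 0)
    lia
  rw [Real.rpow_two, sq_abs, mul_one_div, inv_le_comm₀ (by positivity) (by positivity), inv_div,
    div_le_iff₀ two_pos]
  nlinarith only [sq_nonneg ((a : ℝ) - 1 / 2)]

lemma summable_inv_one_add_nat_sq : Summable fun m : ℕ => (1 + (m : ℝ) ^ 2)⁻¹ :=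
  (summable_inv_one_add_int_sq.comp_injective Nat.cast_injective).congr fun m => by simp

lemma summable_latticeWeight : Summable latticeWeight :=
  summable_inv_one_add_int_sq.mul_of_nonneg summable_inv_one_add_int_sq
    (fun _ => by positivity) (fun _ => by positivity)

variable {G : Type*} [AddCommGroup G] {g : G → ℝ} {q : ℕ → ℝ}

lemma sum_Ico_mul_add_mul_reflect_le (hq : Summable q) (hq₀ : ∀ m, 0 ≤ q m) {x y : ℝ}
    (hx : 0 ≤ x) (hy : 0 ≤ y) (p : ℕ) :
    ∑ m ∈ Finset.Ico 1 p, (x * q m + y * q (p - m)) ≤ (∑' m, q m) * (x + y) := by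
  have hreflect : ∑ m ∈ Finset.Ico 1 p, q (p - m) = ∑ m ∈ Finset.Ico 1 p, q m := by
    simpa using Finset.sum_Ico_reflect q 1 (Nat.le_succ p)
  have hle : ∑ m ∈ Finset.Ico 1 p, q m ≤ ∑' m, q m := hq.sum_le_tsum _ fun m _ => hq₀ m
  calc ∑ m ∈ Finset.Ico 1 p, (x * q m + y * q (p - m))
      = (∑ m ∈ Finset.Ico 1 p, q m) * (x + y) := by
        rw [Finset.sum_add_distrib, ← Finset.mul_sum, ← Finset.mul_sum, hreflect]
        ring
    _ ≤ (∑' m, q m) * (x + y) := by gcongr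

lemma hasSum_add_comp_sub_left (hg : Summable g) (κ : G) :
    HasSum (fun z => g z + g (κ - z)) (2 * ∑' z, g z) := by
  rw [two_mul]
  exact hg.hasSum.add ((Equiv.subLeft κ).hasSum_iff.mpr hg.hasSum)

lemma summable_and_tsum_le_of_le_convolution_weight {F : G → ℕ → ℝ} {κ : G} {p : ℕ} {A : ℝ}
    (hg : Summable g) (hg₀ : ∀ z, 0 ≤ g z) (hq : Summable q) (hq₀ : ∀ m, 0 ≤ q m) (hA : 0 ≤ A)
    (hF₀ : ∀ z, ∀ m ∈ Finset.Ico 1 p, 0 ≤ F z m)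
    (hF : ∀ z, ∀ m ∈ Finset.Ico 1 p, F z m ≤ A * (g z * q m + g (κ - z) * q (p - m))) :
    Summable (fun z => ∑ m ∈ Finset.Ico 1 p, F z m) ∧
      ∑' z, ∑ m ∈ Finset.Ico 1 p, F z m ≤ A * ((∑' m, q m) * (2 * ∑' z, g z)) := by
  have hle (z : G) : ∑ m ∈ Finset.Ico 1 p, F z m ≤ A * ((∑' m, q m) * (g z + g (κ - z))) :=
    calc ∑ m ∈ Finset.Ico 1 p, F z m
        ≤ A * ∑ m ∈ Finset.Ico 1 p, (g z * q m + g (κ - z) * q (p - m)) := by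
          rw [Finset.mul_sum]
          exact Finset.sum_le_sum (hF z)
      _ ≤ A * ((∑' m, q m) * (g z + g (κ - z))) := by
          gcongr
          exact sum_Ico_mul_add_mul_reflect_le hq hq₀ (hg₀ z) (hg₀ (κ - z)) p
  have hmajorant := ((hasSum_add_comp_sub_left hg κ).mul_left (∑' m, q m)).mul_left A
  have hsummable : Summable fun z => ∑ m ∈ Finset.Ico 1 p, F z m :=
    .of_nonneg_of_le (fun z => Finset.sum_nonneg (hF₀ z)) hle hmajorant.summable
  exact ⟨hsummable, hasSum_le hle hsummable.hasSum hmajorant⟩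

end Summation

theorem echo_summation_estimate_general {δ θ₀ : ℝ} (hδ₀ : 0 < δ) (hδ₁ : δ < 1) (hθ₀ : 0 < θ₀)
    (σ : ℝ) :
    ∃ C : ℝ, 0 < C ∧ ∀ (k η : ℤ) (p : ℕ), k ≠ 0 → ∀ t : ℝ, 0 ≤ t →
      Summable (fun z : ℤ × ℤ => ∑ p₁ ∈ Finset.Ico 1 p, echoTerm δ σ θ₀ k η p t z p₁) ∧
      (∑' z : ℤ × ℤ, ∑ p₁ ∈ Finset.Ico 1 p, echoTerm δ σ θ₀ k η p t z p₁) ≤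
        C * √(1 + t ^ 2) ^ (-σ) := by
  obtain ⟨C, hC, hterm⟩ := exists_echoTerm_le hθ₀ hδ₀ hδ₁ σ
  have hq₀ (m : ℕ) : 0 < (1 + (m : ℝ) ^ 2)⁻¹ := by positivity
  have hQ := summable_inv_one_add_nat_sq.tsum_pos (fun m => (hq₀ m).le) 0 (hq₀ 0)
  have hR := summable_latticeWeight.tsum_pos (fun z => (latticeWeight_pos z).le) 0
    (latticeWeight_pos 0)
  refine ⟨C * ((∑' m : ℕ, (1 + (m : ℝ) ^ 2)⁻¹) * (2 * ∑' z, latticeWeight z)), by positivity,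
    fun k η p hk t ht => ?_⟩
  rw [mul_right_comm]
  exact summable_and_tsum_le_of_le_convolution_weight summable_latticeWeight
    (fun z => (latticeWeight_pos z).le) summable_inv_one_add_nat_sq (fun m => (hq₀ m).le)
    (by positivity) (fun z p₁ _ => echoTerm_nonneg δ σ θ₀ k η p z p₁ ht)
    (fun z => hterm k η p t z hk ht)

/-- The central echo-summation estimate: for `δ ∈ (0,1)` small enough,
`σ > 1`, `θ₀, θ′ > 0`, the sum over all sextets `(k₁,η₁,p₁,k₂,η₂,p₂)` with `k₁+k₂=k`,
`η₁+η₂=η`, `p₁+p₂=p`, `k₁ ≠ 0`, `p₁,p₂ ≥ 1` of the echo time integrals is bounded by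
`C⟨t⟩^{−σ}`, uniformly in `k ≠ 0`, `η`, `p ≥ 2`, and `t > 0`. -/
theorem echo_summation_estimate (σ θ₀ θ' : ℝ) (hσ : 1 < σ) (hθ₀ : 0 < θ₀) (hθ' : 0 < θ') :
    ∃ δ₀ : ℝ, 0 < δ₀ ∧ δ₀ < 1 ∧ ∀ δ : ℝ, 0 < δ → δ ≤ δ₀ →
      ∃ C : ℝ, 0 < C ∧ ∀ (k η : ℤ) (p : ℕ), k ≠ 0 → 2 ≤ p → ∀ t : ℝ, 0 < t →
        Summable (fun z : ℤ × ℤ => ∑ p₁ ∈ Finset.Ico 1 p, echoTerm δ σ θ₀ k η p t z p₁) ∧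
        (∑' z : ℤ × ℤ, ∑ p₁ ∈ Finset.Ico 1 p, echoTerm δ σ θ₀ k η p t z p₁) ≤
          C * (Real.sqrt (1 + t ^ 2)) ^ (-σ) := by
  refine ⟨1 / 2, by norm_num, by norm_num, fun δ hδ hδ_le => ?_⟩
  obtain ⟨C, hC, h⟩ := echo_summation_estimate_general hδ (by linarith) hθ₀ σ
  exact ⟨C, hC, fun k η p hk _ t ht => h k η p hk t ht.le⟩
end

section
/- Let δ ∈ (0,1), σ > 1, and θ, θ′ > 0. Then there exists a constant C > 0 such that for every t > 0: ∫₀ᵗ (t−s) e^{−θ(s^{−δ} − t^{−δ})⟨t⟩} e^{−θ′⟨s⟩^{1−δ}} ⟨s⟩^{−σ} ds ≤ C ⟨t⟩^{−σ}, where ⟨t⟩ = √(1+t²). -/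
open MeasureTheory

/-! Write `x = ⟨t⟩`. The two exponents add up to at least `κ x ^ (1 - δ)` for some `κ > 0`: if
`s ≤ t / 2` then `s ^ (-δ) - t ^ (-δ) ≥ (2 ^ δ - 1) x ^ (-δ)`, and if `s ≥ t / 2` then
`⟨s⟩ ≥ x / 2`. All other factors, and the length of the interval, are bounded by powers of `x`,
which the stretched exponential `e^{-κ x ^ (1 - δ)}` absorbs. -/

-- The Japanese bracket `⟨x⟩`, whose usual delimiters are taken by anonymous constructors.
local notation "⟪" x "⟫" => Real.sqrt (1 + x ^ 2)

section Bracket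

variable {c s t : ℝ}

lemma one_le_bracket (t : ℝ) : 1 ≤ ⟪t⟫ :=
  Real.one_le_sqrt.2 (le_add_of_nonneg_right (sq_nonneg t))

lemma le_bracket (t : ℝ) : t ≤ ⟪t⟫ :=
  Real.le_sqrt_of_sq_le (le_add_of_nonneg_left zero_le_one)

lemma mul_bracket_le_bracket (hc₀ : 0 ≤ c) (hc₁ : c ≤ 1) (h : c * |t| ≤ |s|) :
    c * ⟪t⟫ ≤ ⟪s⟫ := by
  apply Real.le_sqrt_of_sq_le
  have hc : c ^ 2 ≤ 1 := pow_le_one₀ hc₀ hc₁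
  have hts : c ^ 2 * t ^ 2 ≤ s ^ 2 := by
    simpa only [mul_pow, sq_abs] using pow_le_pow_left₀ (by positivity) h 2
  rw [mul_pow, Real.sq_sqrt (by positivity)]
  linarith

lemma bracket_rpow_le_bracket_rpow_abs (h : |s| ≤ |t|) (p : ℝ) : ⟪s⟫ ^ p ≤ ⟪t⟫ ^ |p| :=
  calc ⟪s⟫ ^ p ≤ ⟪s⟫ ^ |p| :=
        Real.rpow_le_rpow_of_exponent_le (one_le_bracket s) (le_abs_self p)
    _ ≤ ⟪t⟫ ^ |p| := by
        have hst : s ^ 2 ≤ t ^ 2 := sq_le_sq.2 h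
        gcongr

end Bracket

lemma exp_neg_mul_rpow_le {a κ p x : ℝ} (ha : 0 < a) (hκ : 0 < κ) (hp : 0 < p) (hx : 0 < x) :
    Real.exp (-(κ * x ^ a)) ≤ (p / (a * κ)) ^ (p / a) * x ^ (-p) := by
  set b := p / (a * κ) with hb_def
  have hb : 0 < b := by positivity
  have hexp : (x ^ a / b) ^ (p / a) ≤ Real.exp (κ * x ^ a) :=
    calc (x ^ a / b) ^ (p / a) ≤ Real.exp (x ^ a / b) ^ (p / a) := by
          gcongr
          linarith [Real.add_one_le_exp (x ^ a / b)]
      _ = Real.exp (κ * x ^ a) := by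
          rw [← Real.exp_mul, hb_def]
          congr 1
          field_simp
  have hpow : (x ^ a / b) ^ (p / a) = (b ^ (p / a) * x ^ (-p))⁻¹ := by
    rw [Real.div_rpow (by positivity) hb.le, ← Real.rpow_mul hx.le, mul_div_cancel₀ p ha.ne',
      Real.rpow_neg hx.le, mul_inv, inv_inv, div_eq_mul_inv, mul_comm]
  rw [Real.exp_neg]
  exact inv_le_of_inv_le₀ (by positivity) (hpow ▸ hexp)

section Exponent

variable {c δ s t x : ℝ}

lemma sub_one_mul_rpow_neg_le_rpow_neg_sub (hc : 0 ≤ c) (hδ : 0 ≤ δ) (hs : 0 < s) (ht : 0 ≤ t)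
    (hst : s ≤ c * t) : (c ^ (-δ) - 1) * t ^ (-δ) ≤ s ^ (-δ) - t ^ (-δ) := by
  have hle : c ^ (-δ) * t ^ (-δ) ≤ s ^ (-δ) := by
    rw [← Real.mul_rpow hc ht]
    exact Real.rpow_le_rpow_of_nonpos hs hst (neg_nonpos.2 hδ)
  linarith

lemma sub_one_mul_rpow_le_rpow_neg_sub_mul (hc₀ : 0 < c) (hc₁ : c ≤ 1) (hδ : 0 ≤ δ) (hs : 0 < s)
    (ht : 0 < t) (hst : s ≤ c * t) (htx : t ≤ x) :
    (c ^ (-δ) - 1) * x ^ (1 - δ) ≤ (s ^ (-δ) - t ^ (-δ)) * x := by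
  have hx : 0 < x := ht.trans_le htx
  have hc : 0 ≤ c ^ (-δ) - 1 :=
    sub_nonneg.2 (Real.one_le_rpow_of_pos_of_le_one_of_nonpos hc₀ hc₁ (neg_nonpos.2 hδ))
  calc (c ^ (-δ) - 1) * x ^ (1 - δ) = (c ^ (-δ) - 1) * x ^ (-δ) * x := by
        rw [sub_eq_neg_add 1 δ, Real.rpow_add hx, Real.rpow_one, mul_assoc]
    _ ≤ (c ^ (-δ) - 1) * t ^ (-δ) * x := by
        gcongr ?_ * ?_ * x
        exact Real.rpow_le_rpow_of_nonpos ht htx (neg_nonpos.2 hδ)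
    _ ≤ (s ^ (-δ) - t ^ (-δ)) * x := by
        gcongr
        exact sub_one_mul_rpow_neg_le_rpow_neg_sub hc₀.le hδ hs ht.le hst

lemma rpow_mul_bracket_rpow_le {a : ℝ} (ha : 0 ≤ a) (hc₀ : 0 ≤ c) (hc₁ : c ≤ 1)
    (h : c * |t| ≤ |s|) : c ^ a * ⟪t⟫ ^ a ≤ ⟪s⟫ ^ a := by
  rw [← Real.mul_rpow hc₀ (Real.sqrt_nonneg _)]
  exact Real.rpow_le_rpow (by positivity) (mul_bracket_le_bracket hc₀ hc₁ h) ha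

lemma exists_pos_mul_bracket_rpow_le_exponent {θ θ' : ℝ} (hδ₀ : 0 < δ) (hδ₁ : δ < 1) (hθ : 0 < θ)
    (hθ' : 0 < θ') :
    ∃ κ : ℝ, 0 < κ ∧ ∀ s t : ℝ, 0 < s → s ≤ t →
      κ * ⟪t⟫ ^ (1 - δ) ≤ θ * (s ^ (-δ) - t ^ (-δ)) * ⟪t⟫ + θ' * ⟪s⟫ ^ (1 - δ) := by
  have hhalf : 0 < (1 / 2 : ℝ) ^ (-δ) - 1 :=
    sub_pos.2 (Real.one_lt_rpow_of_pos_of_lt_one_of_neg (by norm_num) (by norm_num)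
      (neg_lt_zero.2 hδ₀))
  refine ⟨min (θ * ((1 / 2) ^ (-δ) - 1)) (θ' * (1 / 2) ^ (1 - δ)), by positivity,
    fun s t hs hst => ?_⟩
  have ht : 0 < t := hs.trans_le hst
  have hfirst : 0 ≤ θ * (s ^ (-δ) - t ^ (-δ)) * ⟪t⟫ := by
    have := sub_nonneg.2 (Real.rpow_le_rpow_of_nonpos hs hst (neg_nonpos.2 hδ₀.le))
    positivity
  rcases le_total s (1 / 2 * t) with hearly | hlate
  · calc _ ≤ θ * ((1 / 2) ^ (-δ) - 1) * ⟪t⟫ ^ (1 - δ) := by gcongr; exact min_le_left _ _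
      _ = θ * (((1 / 2) ^ (-δ) - 1) * ⟪t⟫ ^ (1 - δ)) := mul_assoc ..
      _ ≤ θ * ((s ^ (-δ) - t ^ (-δ)) * ⟪t⟫) := by
          gcongr θ * ?_
          exact sub_one_mul_rpow_le_rpow_neg_sub_mul (by norm_num) (by norm_num) hδ₀.le hs ht
            hearly (le_bracket t)
      _ = θ * (s ^ (-δ) - t ^ (-δ)) * ⟪t⟫ := (mul_assoc ..).symm
      _ ≤ _ := le_add_of_nonneg_right (by positivity)
  · calc _ ≤ θ' * (1 / 2) ^ (1 - δ) * ⟪t⟫ ^ (1 - δ) := by gcongr; exact min_le_right _ _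
      _ = θ' * ((1 / 2) ^ (1 - δ) * ⟪t⟫ ^ (1 - δ)) := mul_assoc ..
      _ ≤ θ' * ⟪s⟫ ^ (1 - δ) := by
          gcongr θ' * ?_
          exact rpow_mul_bracket_rpow_le (sub_nonneg.2 hδ₁.le) (by norm_num) (by norm_num)
            (by rwa [abs_of_pos ht, abs_of_pos hs])
      _ ≤ _ := le_add_of_nonneg_left hfirst

end Exponent

section Integral

variable {δ θ θ' : ℝ}

lemma exists_norm_integrand_le (hδ₀ : 0 < δ) (hδ₁ : δ < 1) (hθ : 0 < θ) (hθ' : 0 < θ') (σ : ℝ) :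
    ∃ κ : ℝ, 0 < κ ∧ ∀ s t : ℝ, 0 < s → s ≤ t →
      ‖(t - s) * Real.exp (-θ * (s ^ (-δ) - t ^ (-δ)) * ⟪t⟫) *
          Real.exp (-θ' * ⟪s⟫ ^ (1 - δ)) * ⟪s⟫ ^ (-σ)‖ ≤
        ⟪t⟫ * Real.exp (-(κ * ⟪t⟫ ^ (1 - δ))) * ⟪t⟫ ^ |σ| := by
  obtain ⟨κ, hκ, hexponent⟩ := exists_pos_mul_bracket_rpow_le_exponent hδ₀ hδ₁ hθ hθ'
  refine ⟨κ, hκ, fun s t hs hst => ?_⟩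
  have : 0 ≤ t - s := sub_nonneg.2 hst
  have hlength : t - s ≤ ⟪t⟫ := by linarith [le_bracket t]
  have hweight : ⟪s⟫ ^ (-σ) ≤ ⟪t⟫ ^ |σ| :=
    abs_neg σ ▸ bracket_rpow_le_bracket_rpow_abs (abs_le_abs_of_nonneg hs.le hst) (-σ)
  rw [Real.norm_of_nonneg (by positivity), mul_assoc (t - s), ← Real.exp_add]
  gcongr
  linarith [hexponent s t hs hst]

theorem time_integral_stretched_exponential_bound_general (hδ₀ : 0 < δ) (hδ₁ : δ < 1)
    (hθ : 0 < θ) (hθ' : 0 < θ') (σ ρ : ℝ) :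
    ∃ C : ℝ, 0 < C ∧ ∀ t : ℝ, 0 < t →
      (∫ s in (0 : ℝ)..t, (t - s) * Real.exp (-θ * (s ^ (-δ) - t ^ (-δ)) * ⟪t⟫) *
          Real.exp (-θ' * ⟪s⟫ ^ (1 - δ)) * ⟪s⟫ ^ (-σ)) ≤ C * ⟪t⟫ ^ (-ρ) := by
  obtain ⟨κ, hκ, hintegrand⟩ := exists_norm_integrand_le hδ₀ hδ₁ hθ hθ' σ
  have ha : 0 < 1 - δ := sub_pos.2 hδ₁
  set p := 2 + |σ| + |ρ| with hp_def
  have hp : 0 < p := by positivity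
  set C := (p / ((1 - δ) * κ)) ^ (p / (1 - δ))
  have hC : 0 < C := by positivity
  refine ⟨C, hC, fun t ht => ?_⟩
  have hx : 0 < ⟪t⟫ := zero_lt_one.trans_le (one_le_bracket t)
  calc _ ≤ ⟪t⟫ * Real.exp (-(κ * ⟪t⟫ ^ (1 - δ))) * ⟪t⟫ ^ |σ| * |t - 0| :=
        (Real.le_norm_self _).trans <| intervalIntegral.norm_integral_le_of_norm_le_const
          fun s hs => by
            rw [Set.uIoc_of_le ht.le] at hs
            exact hintegrand s t hs.1 hs.2
    _ ≤ ⟪t⟫ * (C * ⟪t⟫ ^ (-p)) * ⟪t⟫ ^ |σ| * ⟪t⟫ := by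
        rw [sub_zero, abs_of_pos ht]
        gcongr
        · exact exp_neg_mul_rpow_le ha hκ hp hx
        · exact le_bracket t
    _ = C * ⟪t⟫ ^ (-|ρ|) := by
        rw [show -|ρ| = -p + |σ| + 1 + 1 by rw [hp_def]; ring, Real.rpow_add_one hx.ne',
          Real.rpow_add_one hx.ne', Real.rpow_add hx]
        ring
    _ ≤ C * ⟪t⟫ ^ (-ρ) := by
        gcongr
        · exact one_le_bracket t
        · exact le_abs_self ρ

end Integral

/-- For `δ ∈ (0,1)`, `σ > 1`, `θ, θ′ > 0`, there is `C > 0` such that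
for every `t > 0`,
`∫₀ᵗ (t−s) e^{−θ(s^{−δ} − t^{−δ})⟨t⟩} e^{−θ′⟨s⟩^{1−δ}} ⟨s⟩^{−σ} ds ≤ C ⟨t⟩^{−σ}`,
where `⟨t⟩ = √(1+t²)`. -/
theorem time_integral_stretched_exponential_bound
    (δ σ θ θ' : ℝ) (hδ0 : 0 < δ) (hδ1 : δ < 1) (hσ : 1 < σ) (hθ : 0 < θ) (hθ' : 0 < θ') :
    ∃ C : ℝ, 0 < C ∧ ∀ t : ℝ, 0 < t →
      (∫ s in (0:ℝ)..t, (t - s) *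
          Real.exp (-θ * (s ^ (-δ) - t ^ (-δ)) * Real.sqrt (1 + t ^ 2)) *
          Real.exp (-θ' * (Real.sqrt (1 + s ^ 2)) ^ (1 - δ)) *
          (Real.sqrt (1 + s ^ 2)) ^ (-σ)) ≤
        C * (Real.sqrt (1 + t ^ 2)) ^ (-σ) :=
  time_integral_stretched_exponential_bound_general hδ0 hδ1 hθ hθ' σ σ
end

section
/- Let δ ∈ (0,1), σ > 1, and θ > 0. Then there exists a constant C > 0 such that for every t > 0: ∫₀ᵗ (t−s) e^{−θ⟨t−s⟩^{1−δ}} ⟨s⟩^{−σ} ds ≤ C ⟨t⟩^{−σ}, where ⟨x⟩ = √(1+x²). -/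
open MeasureTheory

/-!
Peetre's inequality `⟨y⟩ ^ a ≤ (√2 ⟨x - y⟩) ^ |a| ⟨x⟩ ^ a` moves the weight from `y` to `x` at the
price of a power of `⟨x - y⟩`, which is absorbed into the kernel. Convolution with a nonnegative
kernel `f` therefore preserves the decay rate `⟨·⟩ ^ a` as soon as `⟨·⟩ ^ |a| * f` is integrable,
and a stretched exponential decays faster than every power of the bracket.
-/

open Real Filter Asymptotics

lemma rpow_le_rpow_abs_mul_rpow {M u v : ℝ} (hM : 0 ≤ M) (hu : 0 < u) (hv : 0 < v)
    (huv : u ≤ M * v) (hvu : v ≤ M * u) (a : ℝ) : u ^ a ≤ M ^ |a| * v ^ a := by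
  rcases le_total 0 a with ha | ha
  · rw [abs_of_nonneg ha, ← mul_rpow hM hv.le]
    exact rpow_le_rpow hu.le huv ha
  · have hpow : v ^ (-a) ≤ M ^ (-a) * u ^ (-a) := by
      rw [← mul_rpow hM hu.le]
      exact rpow_le_rpow hv.le hvu (neg_nonneg.2 ha)
    rw [rpow_neg hv.le, rpow_neg hu.le, ← div_eq_mul_inv, le_div_iff₀ (by positivity),
      inv_mul_le_iff₀ (by positivity)] at hpow
    rwa [abs_of_nonpos ha, mul_comm]

section Bracket

variable {E : Type*} [SeminormedAddCommGroup E]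

/-- The Japanese bracket `⟨x⟩ = √(1 + ‖x‖²)`, a smooth substitute for `1 + ‖x‖` measuring growth
and decay at infinity. -/
noncomputable def japaneseBracket (x : E) : ℝ := √(1 + ‖x‖ ^ 2)

lemma japaneseBracket_pos (x : E) : 0 < japaneseBracket x :=
  sqrt_pos.2 (by positivity)

lemma norm_le_japaneseBracket (x : E) : ‖x‖ ≤ japaneseBracket x :=
  le_sqrt_of_sq_le (by linarith)

lemma continuous_japaneseBracket : Continuous (japaneseBracket : E → ℝ) := by
  unfold japaneseBracket
  fun_prop

lemma continuous_japaneseBracket_rpow (a : ℝ) : Continuous fun x : E ↦ japaneseBracket x ^ a :=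
  continuous_japaneseBracket.rpow_const fun x ↦ .inl (japaneseBracket_pos x).ne'

lemma japaneseBracket_sub_comm (x y : E) : japaneseBracket (x - y) = japaneseBracket (y - x) := by
  rw [japaneseBracket, norm_sub_rev, japaneseBracket]

lemma japaneseBracket_add_le (x y : E) :
    japaneseBracket (x + y) ≤ √2 * japaneseBracket x * japaneseBracket y := by
  unfold japaneseBracket
  rw [← sqrt_mul zero_le_two, ← sqrt_mul (by positivity)]
  refine sqrt_le_sqrt ?_
  calc 1 + ‖x + y‖ ^ 2 ≤ 1 + (‖x‖ + ‖y‖) ^ 2 := by gcongr; exact norm_add_le x y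
    _ ≤ 2 * (1 + ‖x‖ ^ 2) * (1 + ‖y‖ ^ 2) := by
      nlinarith [sq_nonneg (‖x‖ - ‖y‖), sq_nonneg (‖x‖ * ‖y‖)]

lemma japaneseBracket_le_mul_sub (x y : E) :
    japaneseBracket x ≤ √2 * japaneseBracket (x - y) * japaneseBracket y := by
  simpa using japaneseBracket_add_le (x - y) y

theorem japaneseBracket_rpow_le (a : ℝ) (x y : E) :
    japaneseBracket y ^ a ≤
      (√2 * japaneseBracket (x - y)) ^ |a| * japaneseBracket x ^ a := by
  have hxy := japaneseBracket_pos (x - y)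
  refine rpow_le_rpow_abs_mul_rpow (by positivity) (japaneseBracket_pos y) (japaneseBracket_pos x)
    ?_ (japaneseBracket_le_mul_sub x y) a
  simpa only [japaneseBracket_sub_comm x y] using japaneseBracket_le_mul_sub y x

end Bracket

theorem setIntegral_mul_japaneseBracket_rpow_le {E : Type*} [SeminormedAddCommGroup E]
    [MeasurableSpace E] [MeasurableAdd E] [MeasurableNeg E] {μ : Measure E}
    [μ.IsAddLeftInvariant] [μ.IsNegInvariant] {f : E → ℝ} {a : ℝ} (hf : ∀ u, 0 ≤ f u)
    (hint : Integrable (fun u ↦ japaneseBracket u ^ |a| * f u) μ) (x : E) (s : Set E) :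
    ∫ y in s, f (x - y) * japaneseBracket y ^ a ∂μ ≤
      √2 ^ |a| * (∫ u, japaneseBracket u ^ |a| * f u ∂μ) * japaneseBracket x ^ a := by
  let g : E → ℝ := fun u ↦ japaneseBracket u ^ |a| * f u
  have hbracket (z : E) (b : ℝ) : 0 ≤ japaneseBracket z ^ b :=
    rpow_nonneg (japaneseBracket_pos z).le b
  have hdom : Integrable (fun y ↦ √2 ^ |a| * g (x - y) * japaneseBracket x ^ a) μ :=
    ((hint.comp_sub_left x).const_mul _).mul_const _
  calc ∫ y in s, f (x - y) * japaneseBracket y ^ a ∂μ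
      ≤ ∫ y in s, √2 ^ |a| * g (x - y) * japaneseBracket x ^ a ∂μ := by
        refine integral_mono_of_nonneg (.of_forall fun y ↦ mul_nonneg (hf _) (hbracket _ _))
          hdom.restrict (.of_forall fun y ↦ ?_)
        calc f (x - y) * japaneseBracket y ^ a
            ≤ f (x - y) * ((√2 * japaneseBracket (x - y)) ^ |a| * japaneseBracket x ^ a) :=
              mul_le_mul_of_nonneg_left (japaneseBracket_rpow_le a x y) (hf _)
          _ = √2 ^ |a| * g (x - y) * japaneseBracket x ^ a := by
              rw [mul_rpow (sqrt_nonneg 2) (japaneseBracket_pos _).le]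
              ring
    _ ≤ ∫ y, √2 ^ |a| * g (x - y) * japaneseBracket x ^ a ∂μ :=
        setIntegral_le_integral hdom <| .of_forall fun y ↦
          mul_nonneg (mul_nonneg (by positivity) (mul_nonneg (hbracket _ _) (hf _))) (hbracket _ _)
    _ = √2 ^ |a| * (∫ u, g u ∂μ) * japaneseBracket x ^ a := by
        rw [integral_mul_const, integral_const_mul, integral_sub_left_eq_self g μ x]

lemma isLittleO_exp_neg_mul_rpow_rpow_atTop {p θ : ℝ} (hp : 0 < p) (hθ : 0 < θ) (a : ℝ) :
    (fun y : ℝ ↦ exp (-θ * y ^ p)) =o[atTop] fun y ↦ y ^ a := by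
  have hcomp := (isLittleO_exp_neg_mul_rpow_atTop hθ (a / p)).comp_tendsto (tendsto_rpow_atTop hp)
  refine hcomp.congr' .rfl ?_
  filter_upwards [eventually_ge_atTop 0] with y hy
  rw [Function.comp_apply, ← rpow_mul hy, mul_div_cancel₀ a hp.ne']

section FiniteDimensional

variable {E : Type*} [NormedAddCommGroup E] [NormedSpace ℝ E] [FiniteDimensional ℝ E]

lemma tendsto_japaneseBracket_cocompact_atTop :
    Tendsto (japaneseBracket : E → ℝ) (cocompact E) atTop :=
  have := FiniteDimensional.proper ℝ E
  tendsto_atTop_mono norm_le_japaneseBracket tendsto_norm_cocompact_atTop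

variable [MeasurableSpace E] [BorelSpace E] (μ : Measure E) [μ.IsAddHaarMeasure]

lemma integrable_japaneseBracket_rpow_neg {r : ℝ} (hr : (Module.finrank ℝ E : ℝ) < r) :
    Integrable (fun x : E ↦ japaneseBracket x ^ (-r)) μ := by
  refine (integrable_rpow_neg_one_add_norm_sq hr).congr (.of_forall fun x ↦ ?_)
  exact rpow_div_two_eq_sqrt (-r) (by positivity)

lemma integrable_japaneseBracket_rpow_mul_exp {p θ : ℝ} (hp : 0 < p) (hθ : 0 < θ) (b : ℝ) :
    Integrable (fun x : E ↦ japaneseBracket x ^ b * exp (-θ * japaneseBracket x ^ p)) μ := by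
  let r : ℝ := Module.finrank ℝ E + 1
  have hcont : Continuous fun x : E ↦ japaneseBracket x ^ b * exp (-θ * japaneseBracket x ^ p) :=
    (continuous_japaneseBracket_rpow b).mul
      ((continuous_japaneseBracket_rpow p).const_mul (-θ)).rexp
  have hdecay : (fun y : ℝ ↦ y ^ b * exp (-θ * y ^ p)) =O[atTop] fun y ↦ y ^ (-r) := by
    refine ((isBigO_refl _ _).mul
      (isLittleO_exp_neg_mul_rpow_rpow_atTop hp hθ (-r - b)).isBigO).congr' .rfl ?_
    filter_upwards [eventually_gt_atTop 0] with y hy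
    rw [← rpow_add hy, add_sub_cancel]
  exact hcont.locallyIntegrable.integrable_of_isBigO_cocompact
    (hdecay.comp_tendsto tendsto_japaneseBracket_cocompact_atTop)
    ((integrable_japaneseBracket_rpow_neg μ (lt_add_one _)).integrableAtFilter _)

lemma integrable_japaneseBracket_rpow_mul_norm_mul_exp {p θ : ℝ} (hp : 0 < p) (hθ : 0 < θ)
    (b : ℝ) :
    Integrable
      (fun x : E ↦ japaneseBracket x ^ b * (‖x‖ * exp (-θ * japaneseBracket x ^ p))) μ := by
  have hcont : Continuous
      fun x : E ↦ japaneseBracket x ^ b * (‖x‖ * exp (-θ * japaneseBracket x ^ p)) :=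
    (continuous_japaneseBracket_rpow b).mul
      (continuous_norm.mul ((continuous_japaneseBracket_rpow p).const_mul (-θ)).rexp)
  refine (integrable_japaneseBracket_rpow_mul_exp μ hp hθ (b + 1)).mono'
    hcont.aestronglyMeasurable (.of_forall fun x ↦ ?_)
  have hx := japaneseBracket_pos x
  rw [norm_of_nonneg (by positivity), rpow_add_one hx.ne', mul_assoc]
  gcongr
  exact norm_le_japaneseBracket x

theorem convolution_stretched_exponential_bound_general {p θ : ℝ} (hp : 0 < p) (hθ : 0 < θ)
    (σ : ℝ) :
    ∃ C : ℝ, 0 < C ∧ ∀ (x : E) (s : Set E),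
      ∫ y in s, ‖x - y‖ * exp (-θ * japaneseBracket (x - y) ^ p) * japaneseBracket y ^ (-σ) ∂μ ≤
        C * japaneseBracket x ^ (-σ) := by
  let f : E → ℝ := fun u ↦ ‖u‖ * exp (-θ * japaneseBracket u ^ p)
  let C : ℝ := √2 ^ |-σ| * ∫ u, japaneseBracket u ^ |-σ| * f u ∂μ
  have hf (u : E) : 0 ≤ f u := by positivity
  have hC : 0 ≤ C := mul_nonneg (by positivity) <| integral_nonneg fun u ↦
    mul_nonneg (rpow_nonneg (japaneseBracket_pos u).le _) (hf u)
  refine ⟨C + 1, by positivity, fun x s ↦ ?_⟩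
  have hx := japaneseBracket_pos x
  calc ∫ y in s, f (x - y) * japaneseBracket y ^ (-σ) ∂μ
      ≤ C * japaneseBracket x ^ (-σ) :=
        setIntegral_mul_japaneseBracket_rpow_le hf
          (integrable_japaneseBracket_rpow_mul_norm_mul_exp μ hp hθ _) x s
    _ ≤ (C + 1) * japaneseBracket x ^ (-σ) := by gcongr; exact le_add_of_nonneg_right zero_le_one

end FiniteDimensional

/-- For `δ ∈ (0,1)`, `σ > 1`, `θ > 0`, there is `C > 0` such that
for every `t > 0`,
`∫₀ᵗ (t−s) e^{−θ⟨t−s⟩^{1−δ}} ⟨s⟩^{−σ} ds ≤ C ⟨t⟩^{−σ}`, where `⟨x⟩ = √(1+x²)`. -/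
theorem convolution_stretched_exponential_bound
    (δ σ θ : ℝ) (hδ0 : 0 < δ) (hδ1 : δ < 1) (hσ : 1 < σ) (hθ : 0 < θ) :
    ∃ C : ℝ, 0 < C ∧ ∀ t : ℝ, 0 < t →
      (∫ s in (0:ℝ)..t, (t - s) *
          Real.exp (-θ * (Real.sqrt (1 + (t - s) ^ 2)) ^ (1 - δ)) *
          (Real.sqrt (1 + s ^ 2)) ^ (-σ)) ≤
        C * (Real.sqrt (1 + t ^ 2)) ^ (-σ) := by
  obtain ⟨C, hC, hbound⟩ :=
    convolution_stretched_exponential_bound_general (volume : Measure ℝ) (sub_pos.2 hδ1) hθ σ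
  simp only [japaneseBracket, norm_eq_abs, sq_abs] at hbound
  refine ⟨C, hC, fun t ht ↦ ?_⟩
  rw [intervalIntegral.integral_of_le ht.le]
  refine (setIntegral_congr_fun measurableSet_Ioc fun s hs ↦ ?_).trans_le (hbound t (Set.Ioc 0 t))
  simp only [abs_of_nonneg (sub_nonneg.2 hs.2)]
end
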